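/- Fix α ∈ [0,1]. (1) If G₁ and G₂ are A_α-cospectral regular graphs and H is an arbitrary graph, then the subdivision-edge joins G₁ ∨̲ H and G₂ ∨̲ H are A_α-cospectral. (2) If H₁ and H₂ are A_α-cospectral graphs with equal A_α-coronals Γ_{A_α(H₁)}(x) = Γ_{A_α(H₂)}(x), and G is a regular graph, then G ∨̲ H₁ and G ∨̲ H₂ are A_α-cospectral. -/

import Mathlib

open Matrix Polynomial
open scoped Classical

noncomputable section

/-- `A_α(G) = α·D(G) + (1-α)·A(G)`, where `D(G)` is the diagonal degree matrix and
`A(G)` the adjacency matrix. -/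
def Aalpha {V : Type*} [Fintype V] (G : SimpleGraph V) (α : ℝ) : Matrix V V ℝ :=
  α • Matrix.diagonal (fun v => (G.degree v : ℝ)) + (1 - α) • G.adjMatrix ℝ

/-- The `M`-coronal `Γ_M(x) = 1ᵀ (xI − M)⁻¹ 1`, i.e. the sum of the entries of
`(xI − M)⁻¹`. -/
def coronal {n : Type*} [Fintype n] (M : Matrix n n ℝ) (x : ℝ) : ℝ :=
  ∑ i, ∑ j, (x • (1 : Matrix n n ℝ) - M)⁻¹ i j

/-- The subdivision-edge join `G₁ ∨̲ G₂`: take the subdivision graph `S(G₁)` (a new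
vertex inserted in each edge of `G₁`) together with `G₂`, and join every inserted
vertex of `S(G₁)` with every vertex of `G₂`. -/
def subdivisionEdgeJoin {V₁ V₂ : Type*} (G₁ : SimpleGraph V₁) (G₂ : SimpleGraph V₂) :
    SimpleGraph (V₁ ⊕ (↥G₁.edgeSet ⊕ V₂)) :=
  SimpleGraph.fromRel fun a b =>
    match a, b with
    | Sum.inl v, Sum.inr (Sum.inl e) => v ∈ (e : Sym2 V₁)
    | Sum.inr (Sum.inl _), Sum.inr (Sum.inr _) => True
    | Sum.inr (Sum.inr u), Sum.inr (Sum.inr w) => G₂.Adj u w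
    | _, _ => False

/-!
Ordering the vertices of `G ∨̲ H` as `S(G)` followed by `H`, the matrix `A_α(G ∨̲ H)` is a
`2 × 2` block matrix with rank-one off-diagonal blocks `(1-α) u 1ᵀ` and its transpose, where `u` is
the indicator vector of the inserted vertices. Away from finitely many `x`, its characteristic
polynomial is therefore the product of those of its diagonal blocks and a factor which involves the
blocks only through `uᵀ(xI - S)⁻¹u`, with `S` the block of `S(G)`, and a shifted coronal of
`A_α(H)`. When `G` is `r`-regular, the original and the inserted vertices form an equitable
partition for `S`, so the first of these numbers depends only on `α`, `r`, `|E(G)|` and `|V(H)|`;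
and a Schur complement, in which `RRᵀ = rI + A(G)` for the vertex-edge incidence matrix `R`,
expresses the characteristic polynomial of `S` through that of `A_α(G)`. Finally `|E(G)|` is itself
determined by the spectrum: `tr A_α(G) = 2α|E(G)|`, and `tr A(G)² = 2|E(G)|` takes care of `α = 0`.
-/

lemma eq_of_eventually_cofinite_eval_eq {R : Type*} [CommRing R] [IsDomain R] [Infinite R]
    {p q : R[X]} (h : ∀ᶠ x in Filter.cofinite, p.eval x = q.eval x) : p = q :=
  eq_of_infinite_eval_eq p q (Filter.frequently_cofinite_iff_infinite.1 h.frequently)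

section Matrix

variable {m n R : Type*} [Fintype m] [DecidableEq m] [Fintype n] [DecidableEq n]

lemma eval_charpoly_eq_det_smul_one_sub [CommRing R] (M : Matrix n n R) (x : R) :
    M.charpoly.eval x = (x • 1 - M).det := by
  rw [eval_charpoly, scalar_apply, smul_one_eq_diagonal]

lemma det_sub_vecMulVec [CommRing R] {A : Matrix n n R} (hA : IsUnit A.det) (u v : n → R) :
    (A - vecMulVec u v).det = A.det * (1 - v ⬝ᵥ A⁻¹ *ᵥ u) := by
  rw [sub_eq_add_neg, ← neg_vecMulVec, vecMulVec_eq Unit,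
    det_add_replicateCol_mul_replicateRow hA, det_unique (n := Unit), Matrix.mul_assoc,
    ← replicateCol_mulVec, Matrix.add_apply, one_apply_eq, replicateRow_mul_replicateCol_apply,
    mulVec_neg, dotProduct_neg, ← sub_eq_add_neg]

lemma det_fromBlocks_vecMulVec [CommRing R] {P : Matrix m m R} {Q : Matrix n n R}
    (hP : IsUnit P.det) (hQ : IsUnit Q.det) (u u' : m → R) (v v' : n → R) :
    (fromBlocks P (vecMulVec u v) (vecMulVec v' u') Q).det =
      P.det * Q.det * (1 - (u' ⬝ᵥ P⁻¹ *ᵥ u) * (v ⬝ᵥ Q⁻¹ *ᵥ v')) := by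
  let _ := invertibleOfIsUnitDet P hP
  have hschur : vecMulVec v' u' * ⅟P * vecMulVec u v =
      vecMulVec ((u' ⬝ᵥ P⁻¹ *ᵥ u) • v') v := by
    rw [invOf_eq_nonsing_inv, vecMulVec_mul, vecMulVec_mul_vecMulVec, ← dotProduct_mulVec,
      vecMulVec_smul, smul_vecMulVec]
  rw [det_fromBlocks₁₁, hschur, det_sub_vecMulVec hQ, mulVec_smul, dotProduct_smul, smul_eq_mul,
    mul_assoc]

lemma eval_charpoly_fromBlocks_vecMulVec [Field R] {P : Matrix m m R} {Q : Matrix n n R} {x : R}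
    (hP : P.charpoly.eval x ≠ 0) (hQ : Q.charpoly.eval x ≠ 0) (u u' : m → R) (v v' : n → R) :
    (fromBlocks P (vecMulVec u v) (vecMulVec v' u') Q).charpoly.eval x =
      P.charpoly.eval x * Q.charpoly.eval x *
        (1 - (u' ⬝ᵥ (x • 1 - P)⁻¹ *ᵥ u) * (v ⬝ᵥ (x • 1 - Q)⁻¹ *ᵥ v')) := by
  have hblocks : x • 1 - fromBlocks P (vecMulVec u v) (vecMulVec v' u') Q =
      fromBlocks (x • 1 - P) (vecMulVec (-u) v) (vecMulVec (-v') u') (x • 1 - Q) := by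
    rw [← fromBlocks_one, fromBlocks_smul, sub_eq_add_neg, fromBlocks_neg, fromBlocks_add]
    simp [sub_eq_add_neg]
  rw [eval_charpoly_eq_det_smul_one_sub] at hP hQ
  simp only [eval_charpoly_eq_det_smul_one_sub, hblocks,
    det_fromBlocks_vecMulVec hP.isUnit hQ.isUnit, mulVec_neg, dotProduct_neg, neg_mul_neg]

lemma card_eq_of_charpoly_eq [CommRing R] [Nontrivial R] {M : Matrix m m R} {N : Matrix n n R}
    (h : M.charpoly = N.charpoly) : Fintype.card m = Fintype.card n := by
  rw [← M.charpoly_natDegree_eq_dim, h, N.charpoly_natDegree_eq_dim]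

lemma trace_eq_of_charpoly_eq [CommRing R] {M : Matrix m m R} {N : Matrix n n R}
    (h : M.charpoly = N.charpoly) : M.trace = N.trace := by
  rw [trace_eq_neg_charpoly_nextCoeff, h, ← trace_eq_neg_charpoly_nextCoeff]

lemma eventually_cofinite_eval_charpoly_ne_zero [CommRing R] [IsDomain R] (M : Matrix n n R) :
    ∀ᶠ x in Filter.cofinite, M.charpoly.eval x ≠ 0 :=
  eventually_cofinite_not_isRoot M.charpoly_monic.ne_zero

lemma eval_sq_charpoly_sq [CommRing R] (M : Matrix n n R) (x : R) :
    (M ^ 2).charpoly.eval (x ^ 2) =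
      (-1) ^ Fintype.card n * M.charpoly.eval x * M.charpoly.eval (-x) := by
  have hfactor : x ^ 2 • 1 - M ^ 2 = -((x • 1 - M) * (-x • 1 - M)) := by
    simp only [sub_mul, mul_sub, smul_mul_assoc, mul_smul_comm, one_mul, mul_one, sq]
    module
  simp only [eval_charpoly_eq_det_smul_one_sub, hfactor, det_neg, det_mul, mul_assoc]

lemma charpoly_sq_eq_of_charpoly_eq [Field R] [Infinite R] {M : Matrix m m R} {N : Matrix n n R}
    (h : M.charpoly = N.charpoly) : (M ^ 2).charpoly = (N ^ 2).charpoly := by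
  refine Polynomial.expand_injective (R := R) two_pos (Polynomial.funext fun x => ?_)
  rw [expand_eval, expand_eval, eval_sq_charpoly_sq, eval_sq_charpoly_sq, h,
    card_eq_of_charpoly_eq h]

lemma det_smul_one_sub_smul [Field R] (M : Matrix n n R) (p : R) {s : R} (hs : s ≠ 0) :
    (p • 1 - s • M).det = s ^ Fintype.card n * M.charpoly.eval (p / s) := by
  rw [eval_charpoly_eq_det_smul_one_sub, ← det_smul, smul_sub, smul_smul, mul_div_cancel₀ _ hs]

lemma det_smul_one_sub_smul_eq_of_charpoly_eq [Field R] {M : Matrix m m R} {N : Matrix n n R}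
    (h : M.charpoly = N.charpoly) (p s : R) :
    (p • 1 - s • M).det = (p • 1 - s • N).det := by
  have hcard := card_eq_of_charpoly_eq h
  rcases eq_or_ne s 0 with rfl | hs
  · simp [hcard]
  · rw [det_smul_one_sub_smul M p hs, det_smul_one_sub_smul N p hs, h, hcard]

lemma det_fromBlocks_smul_one₂₂ [Field R] (A : Matrix m m R) (B : Matrix m n R)
    (C : Matrix n m R) {c : R} (hc : c ≠ 0) :
    (fromBlocks A B C (c • 1)).det = c ^ Fintype.card n * (A - c⁻¹ • (B * C)).det := by
  let _ : Invertible (c • (1 : Matrix n n R)) :=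
    ⟨c⁻¹ • 1, by simp [smul_smul, hc], by simp [smul_smul, hc]⟩
  have hinv : ⅟(c • (1 : Matrix n n R)) = c⁻¹ • 1 := rfl
  rw [det_fromBlocks₂₂, det_smul, det_one, mul_one, hinv, Matrix.mul_smul, Matrix.mul_one,
    Matrix.smul_mul]

end Matrix

lemma coronal_eq_dotProduct_mulVec {n : Type*} [Fintype n] [DecidableEq n] (M : Matrix n n ℝ)
    (x : ℝ) : coronal M x = 1 ⬝ᵥ (x • 1 - M)⁻¹ *ᵥ 1 := by
  simp only [coronal, dotProduct, mulVec, Pi.one_apply, one_mul, mul_one]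
  congr!

lemma sum_coe_eq_sum_of_forall_notMem {ι R : Type*} [Fintype ι] [AddCommMonoid R] (s : Set ι)
    [Fintype s] {f : ι → R} (hf : ∀ i ∉ s, f i = 0) : ∑ i : s, f i = ∑ i, f i :=
  Fintype.sum_of_injective (↑) Subtype.val_injective _ _ (by simpa using hf) fun _ => rfl

section Incidence

variable {V : Type*} (G : SimpleGraph V) (R : Type*)

/-- The vertex-edge incidence matrix of `G`. Unlike `SimpleGraph.incMatrix`, whose columns are all
unordered pairs of vertices, it has only the edges of `G` as columns. -/
def edgeIncMatrix [Zero R] [One R] : Matrix V G.edgeSet R :=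
  of fun v e => if v ∈ (e : Sym2 V) then 1 else 0

lemma edgeIncMatrix_eq_submatrix_incMatrix [Zero R] [One R] [DecidableEq V] :
    edgeIncMatrix G R = (G.incMatrix R).submatrix id (↑) := by
  ext v e
  simp [edgeIncMatrix, SimpleGraph.incMatrix_apply', SimpleGraph.incidenceSet, e.2]

variable [Fintype V]

lemma one_vecMul_edgeIncMatrix [NonAssocSemiring R] : 1 ᵥ* edgeIncMatrix G R = 2 := by
  ext e
  simpa [vecMul, dotProduct, edgeIncMatrix_eq_submatrix_incMatrix] using
    G.sum_incMatrix_apply_of_mem_edgeSet e.2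

lemma edgeIncMatrix_mulVec_one [Fintype G.edgeSet] [NonAssocSemiring R] :
    edgeIncMatrix G R *ᵥ 1 = fun v => (G.degree v : R) := by
  ext v
  rw [← G.sum_incMatrix_apply, ← sum_coe_eq_sum_of_forall_notMem G.edgeSet fun e he =>
    G.incMatrix_of_notMem_incidenceSet fun h => he h.1]
  simp [mulVec, dotProduct, edgeIncMatrix_eq_submatrix_incMatrix]

lemma edgeIncMatrix_mul_transpose [DecidableEq V] [Fintype G.edgeSet] [Semiring R] :
    edgeIncMatrix G R * (edgeIncMatrix G R)ᵀ =
      diagonal (fun v => (G.degree v : R)) + G.adjMatrix R := by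
  have hinc : edgeIncMatrix G R * (edgeIncMatrix G R)ᵀ = G.incMatrix R * (G.incMatrix R)ᵀ := by
    ext v w
    simpa [mul_apply, edgeIncMatrix_eq_submatrix_incMatrix] using
      sum_coe_eq_sum_of_forall_notMem G.edgeSet
        (f := fun e => G.incMatrix R v e * G.incMatrix R w e)
        fun e he => by rw [G.incMatrix_of_notMem_incidenceSet fun h => he h.1, zero_mul]
  rw [hinc, G.incMatrix_mul_transpose]
  ext v w
  by_cases hvw : v = w <;> simp [hvw, SimpleGraph.adjMatrix_apply]

end Incidence

section Join

variable {V W : Type*} (G : SimpleGraph V) (H : SimpleGraph W)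

lemma adjMatrix_subdivisionEdgeJoin (R : Type*) [NonAssocSemiring R] :
    (subdivisionEdgeJoin G H).adjMatrix R =
      (fromBlocks (fromBlocks 0 (edgeIncMatrix G R) (edgeIncMatrix G R)ᵀ 0)
        (vecMulVec (Sum.elim 0 1) 1) (vecMulVec 1 (Sum.elim 0 1)) (H.adjMatrix R)).submatrix
        (Equiv.sumAssoc V G.edgeSet W).symm (Equiv.sumAssoc V G.edgeSet W).symm := by
  have hne {u w : W} : u ≠ w ∧ H.Adj u w ↔ H.Adj u w := and_iff_right_of_imp fun h => h.ne
  ext (v | e | u) (v | e | u) <;> rw [SimpleGraph.adjMatrix_apply] <;>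
    simp [subdivisionEdgeJoin, edgeIncMatrix, SimpleGraph.adjMatrix_apply, H.adj_comm, hne]

variable [Fintype V]

lemma degree_eq_sum_adjMatrix_apply (v : V) : G.degree v = ∑ w, G.adjMatrix ℕ v w := by
  simp [SimpleGraph.adjMatrix_apply, ← SimpleGraph.card_neighborFinset_eq_degree,
    SimpleGraph.neighborFinset_eq_filter]

variable [Fintype W] [Fintype G.edgeSet]

lemma degree_subdivisionEdgeJoin (i : V ⊕ (G.edgeSet ⊕ W)) :
    (subdivisionEdgeJoin G H).degree i =
      Sum.elim (fun v => G.degree v) (Sum.elim (fun _ => 2 + Fintype.card W)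
        fun u => Fintype.card G.edgeSet + H.degree u) i := by
  have hrow := congrFun (edgeIncMatrix_mulVec_one G ℕ)
  have hcol := congrFun (one_vecMul_edgeIncMatrix G ℕ)
  simp only [mulVec, vecMul, dotProduct, Pi.one_apply, mul_one, one_mul, Nat.cast_id] at hrow hcol
  rw [degree_eq_sum_adjMatrix_apply, adjMatrix_subdivisionEdgeJoin]
  rcases i with v | e | u <;> simp [hrow, hcol, degree_eq_sum_adjMatrix_apply H]

end Join

section Subdivision

variable {V : Type*} [Fintype V] [DecidableEq V] (G : SimpleGraph V)

/-- The matrix `A_α` of the subdivision graph `S(G)`, except that every inserted vertex is given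
degree `d`. It is the principal block of `A_α` of a subdivision-edge join `G ∨̲ H` indexed by
`S(G)`, where `d = 2 + |V(H)|`. -/
def subdivisionAalpha (α d : ℝ) : Matrix (V ⊕ G.edgeSet) (V ⊕ G.edgeSet) ℝ :=
  fromBlocks (α • diagonal fun v => (G.degree v : ℝ)) ((1 - α) • edgeIncMatrix G ℝ)
    ((1 - α) • (edgeIncMatrix G ℝ)ᵀ) ((α * d) • 1)

lemma Aalpha_subdivisionEdgeJoin {W : Type*} [Fintype W] [DecidableEq W] [Fintype G.edgeSet]
    (H : SimpleGraph W) (α : ℝ) :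
    Aalpha (subdivisionEdgeJoin G H) α =
      (fromBlocks (subdivisionAalpha G α (2 + Fintype.card W))
        (vecMulVec ((1 - α) • Sum.elim (0 : V → ℝ) (1 : G.edgeSet → ℝ)) 1)
        (vecMulVec 1 ((1 - α) • Sum.elim (0 : V → ℝ) (1 : G.edgeSet → ℝ)))
        ((α * Fintype.card G.edgeSet) • 1 + Aalpha H α)).submatrix
        (Equiv.sumAssoc V G.edgeSet W).symm (Equiv.sumAssoc V G.edgeSet W).symm := by
  simp only [Aalpha, adjMatrix_subdivisionEdgeJoin, degree_subdivisionEdgeJoin]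
  ext (v | e | u) (v' | e' | u') <;>
    simp [subdivisionAalpha, diagonal_apply, one_apply, mul_add, ite_add_zero, add_assoc]

/-- The quotient matrix of `subdivisionAalpha G α d`, for an `r`-regular graph `G`, by the
equitable partition of `S(G)` into original and inserted vertices. -/
def subdivisionQuotient (α r d : ℝ) : Matrix (Fin 2) (Fin 2) ℝ :=
  !![α * r, (1 - α) * r; 2 * (1 - α), α * d]

lemma eval_charpoly_subdivisionQuotient (α r d x : ℝ) :
    (subdivisionQuotient α r d).charpoly.eval x =
      (x - α * r) * (x - α * d) - 2 * (1 - α) ^ 2 * r := by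
  simp only [charpoly_fin_two, subdivisionQuotient, trace_fin_two_of, det_fin_two_of, eval_add,
    eval_sub, eval_mul, eval_pow, eval_X, eval_C]
  ring

variable {G}

lemma smul_one_sub_subdivisionAalpha_mulVec [Fintype G.edgeSet] {r : ℕ}
    (hG : G.IsRegularOfDegree r) (α d x : ℝ) :
    (x • 1 - subdivisionAalpha G α d) *ᵥ
        Sum.elim (((1 - α) * r) • 1) ((x - α * r) • 1) =
      (subdivisionQuotient α r d).charpoly.eval x • Sum.elim (0 : V → ℝ) (1 : G.edgeSet → ℝ) := by
  have hrow := congrFun (edgeIncMatrix_mulVec_one G ℝ)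
  have hcol := congrFun (one_vecMul_edgeIncMatrix G ℝ)
  rw [sub_mulVec, smul_mulVec, one_mulVec, subdivisionAalpha, fromBlocks_mulVec,
    eval_charpoly_subdivisionQuotient]
  ext (v | e)
  · simp only [Sum.elim_comp_inl, Sum.elim_comp_inr, mulVec_smul, smul_mulVec, mulVec_diagonal,
      Pi.sub_apply, Pi.add_apply, Pi.smul_apply, Sum.elim_inl, Pi.one_apply, Pi.zero_apply,
      smul_eq_mul, hrow, hG.degree_eq v]
    ring
  · simp only [Sum.elim_comp_inl, Sum.elim_comp_inr, mulVec_smul, smul_mulVec, one_mulVec,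
      mulVec_transpose, Pi.sub_apply, Pi.add_apply, Pi.smul_apply, Sum.elim_inr, Pi.ofNat_apply,
      smul_eq_mul, hcol]
    ring

lemma dotProduct_inv_smul_one_sub_subdivisionAalpha_mulVec [Fintype G.edgeSet] {r : ℕ}
    (hG : G.IsRegularOfDegree r) {α d x : ℝ} (hS : (subdivisionAalpha G α d).charpoly.eval x ≠ 0)
    (hQ : (subdivisionQuotient α r d).charpoly.eval x ≠ 0) :
    Sum.elim (0 : V → ℝ) (1 : G.edgeSet → ℝ) ⬝ᵥ
        (x • 1 - subdivisionAalpha G α d)⁻¹ *ᵥ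
          Sum.elim 0 1 =
      Fintype.card G.edgeSet * (x - α * r) / (subdivisionQuotient α r d).charpoly.eval x := by
  rw [eval_charpoly_eq_det_smul_one_sub] at hS
  rw [eq_div_iff hQ, mul_comm, ← smul_eq_mul, ← dotProduct_smul, ← mulVec_smul,
    ← smul_one_sub_subdivisionAalpha_mulVec hG, mulVec_mulVec, nonsing_inv_mul _ hS.isUnit,
    one_mulVec, sumElim_dotProduct_sumElim]
  simp [mul_comm]

lemma eval_charpoly_Aalpha_subdivisionEdgeJoin {W : Type*} [Fintype W] [DecidableEq W]
    [Fintype G.edgeSet] {r : ℕ} (hG : G.IsRegularOfDegree r) (H : SimpleGraph W) {α x : ℝ}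
    (hS : (subdivisionAalpha G α (2 + Fintype.card W)).charpoly.eval x ≠ 0)
    (hQ : (subdivisionQuotient α r (2 + Fintype.card W)).charpoly.eval x ≠ 0)
    (hH : (Aalpha H α).charpoly.eval (x - α * Fintype.card G.edgeSet) ≠ 0) :
    (Aalpha (subdivisionEdgeJoin G H) α).charpoly.eval x =
      (subdivisionAalpha G α (2 + Fintype.card W)).charpoly.eval x *
        (Aalpha H α).charpoly.eval (x - α * Fintype.card G.edgeSet) *
        (1 - (1 - α) ^ 2 * (Fintype.card G.edgeSet * (x - α * r) /
            (subdivisionQuotient α r (2 + Fintype.card W)).charpoly.eval x) *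
          coronal (Aalpha H α) (x - α * Fintype.card G.edgeSet)) := by
  have hshift : x • 1 - ((α * Fintype.card G.edgeSet) • 1 + Aalpha H α) =
      (x - α * Fintype.card G.edgeSet) • 1 - Aalpha H α := by
    module
  have hH_shift : ((α * Fintype.card G.edgeSet) • 1 + Aalpha H α).charpoly.eval x =
      (Aalpha H α).charpoly.eval (x - α * Fintype.card G.edgeSet) := by
    simp only [eval_charpoly_eq_det_smul_one_sub, hshift]
  rw [Aalpha_subdivisionEdgeJoin, ← reindex_apply, charpoly_reindex,
    eval_charpoly_fromBlocks_vecMulVec hS (hH_shift ▸ hH), hH_shift, hshift,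
    ← coronal_eq_dotProduct_mulVec, smul_dotProduct, mulVec_smul, dotProduct_smul,
    dotProduct_inv_smul_one_sub_subdivisionAalpha_mulVec hG hS hQ, smul_smul, smul_eq_mul, sq]

end Subdivision

section Cospectral

lemma Aalpha_of_isRegularOfDegree {V : Type*} [Fintype V] [DecidableEq V] {G : SimpleGraph V}
    {r : ℕ} (hG : G.IsRegularOfDegree r) (α : ℝ) :
    Aalpha G α = (α * r) • 1 + (1 - α) • G.adjMatrix ℝ := by
  ext v w
  simp [Aalpha, hG.degree_eq, diagonal_apply, one_apply]

lemma eval_charpoly_subdivisionAalpha {V : Type*} [Fintype V] [DecidableEq V]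
    {G : SimpleGraph V} [Fintype G.edgeSet] {r : ℕ} (hG : G.IsRegularOfDegree r) {α d x : ℝ}
    (hx : x - α * d ≠ 0) :
    (subdivisionAalpha G α d).charpoly.eval x =
      (x - α * d) ^ Fintype.card G.edgeSet *
        ((x - α * r - (x - α * d)⁻¹ * (1 - α) * (1 - 2 * α) * r) • 1 -
          ((x - α * d)⁻¹ * (1 - α)) • Aalpha G α).det := by
  have hdeg : diagonal (fun v => (G.degree v : ℝ)) = (r : ℝ) • 1 := by
    simp only [hG.degree_eq, smul_one_eq_diagonal]
  have hblocks : x • 1 - subdivisionAalpha G α d =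
      fromBlocks ((x - α * r) • 1) (-(1 - α) • edgeIncMatrix G ℝ)
        (-(1 - α) • (edgeIncMatrix G ℝ)ᵀ) ((x - α * d) • 1) := by
    rw [subdivisionAalpha, hdeg, ← fromBlocks_one, fromBlocks_smul, sub_eq_add_neg,
      fromBlocks_neg, fromBlocks_add]
    congr 1 <;> module
  rw [eval_charpoly_eq_det_smul_one_sub, hblocks, det_fromBlocks_smul_one₂₂ _ _ _ hx,
    Matrix.smul_mul, Matrix.mul_smul, edgeIncMatrix_mul_transpose, hdeg,
    Aalpha_of_isRegularOfDegree hG]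
  congr 2
  module

lemma trace_adjMatrix_sq {V : Type*} [Fintype V] [DecidableEq V] (G : SimpleGraph V) (R : Type*)
    [Semiring R] : (G.adjMatrix R ^ 2).trace = ∑ v, (G.degree v : R) := by
  simp only [sq, trace, diag_apply, SimpleGraph.adjMatrix_mul_self_apply_self]

lemma trace_Aalpha {V : Type*} [Fintype V] (G : SimpleGraph V) (α : ℝ) :
    (Aalpha G α).trace = α * ∑ v, (G.degree v : ℝ) := by
  simp [Aalpha]

variable {V₁ V₂ : Type*} [Fintype V₁] [DecidableEq V₁] [Fintype V₂] [DecidableEq V₂]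
  {G₁ : SimpleGraph V₁} {G₂ : SimpleGraph V₂} {α : ℝ}

lemma sum_degree_eq_of_charpoly_Aalpha_eq (h : (Aalpha G₁ α).charpoly = (Aalpha G₂ α).charpoly) :
    ∑ v, G₁.degree v = ∑ v, G₂.degree v := by
  rcases eq_or_ne α 0 with rfl | hα
  · have hadj : (G₁.adjMatrix ℝ).charpoly = (G₂.adjMatrix ℝ).charpoly := by
      simpa [Aalpha] using h
    have htrace := trace_eq_of_charpoly_eq (charpoly_sq_eq_of_charpoly_eq hadj)
    rw [trace_adjMatrix_sq, trace_adjMatrix_sq] at htrace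
    exact_mod_cast htrace
  · have htrace := trace_eq_of_charpoly_eq h
    rw [trace_Aalpha, trace_Aalpha] at htrace
    exact_mod_cast mul_left_cancel₀ hα htrace

lemma isRegularOfDegree_of_charpoly_Aalpha_eq {r₁ r₂ : ℕ} (hr₁ : G₁.IsRegularOfDegree r₁)
    (hr₂ : G₂.IsRegularOfDegree r₂) (h : (Aalpha G₁ α).charpoly = (Aalpha G₂ α).charpoly) :
    G₂.IsRegularOfDegree r₁ := by
  have hsum := sum_degree_eq_of_charpoly_Aalpha_eq h
  simp only [hr₁.degree_eq, hr₂.degree_eq, Finset.sum_const, Finset.card_univ, smul_eq_mul,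
    card_eq_of_charpoly_eq h] at hsum
  intro v
  rw [hr₂ v]
  exact (mul_left_cancel₀ (Fintype.card_pos_iff.2 ⟨v⟩).ne' hsum).symm

variable [Fintype G₁.edgeSet] [Fintype G₂.edgeSet]

lemma card_edgeSet_eq_of_charpoly_Aalpha_eq
    (h : (Aalpha G₁ α).charpoly = (Aalpha G₂ α).charpoly) :
    Fintype.card G₁.edgeSet = Fintype.card G₂.edgeSet := by
  have hsum := sum_degree_eq_of_charpoly_Aalpha_eq h
  rw [G₁.sum_degrees_eq_twice_card_edges, G₂.sum_degrees_eq_twice_card_edges] at hsum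
  simpa [← Set.ncard_coe_finset] using hsum

lemma charpoly_subdivisionAalpha_eq_of_charpoly_Aalpha_eq {r : ℕ}
    (hr₁ : G₁.IsRegularOfDegree r) (hr₂ : G₂.IsRegularOfDegree r)
    (h : (Aalpha G₁ α).charpoly = (Aalpha G₂ α).charpoly) (d : ℝ) :
    (subdivisionAalpha G₁ α d).charpoly = (subdivisionAalpha G₂ α d).charpoly := by
  refine eq_of_eventually_cofinite_eval_eq ?_
  filter_upwards [Filter.eventually_cofinite_ne (α * d)] with x hx
  rw [← sub_ne_zero] at hx
  rw [eval_charpoly_subdivisionAalpha hr₁ hx, eval_charpoly_subdivisionAalpha hr₂ hx,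
    card_edgeSet_eq_of_charpoly_Aalpha_eq h, det_smul_one_sub_smul_eq_of_charpoly_eq h]

variable {W₁ W₂ : Type*} [Fintype W₁] [DecidableEq W₁] [Fintype W₂] [DecidableEq W₂]
  {H₁ : SimpleGraph W₁} {H₂ : SimpleGraph W₂}

theorem Aalpha_cospectral_subdivisionEdgeJoin_general {r₁ r₂ : ℕ}
    (hr₁ : G₁.IsRegularOfDegree r₁) (hr₂ : G₂.IsRegularOfDegree r₂)
    (hG : (Aalpha G₁ α).charpoly = (Aalpha G₂ α).charpoly)
    (hH : (Aalpha H₁ α).charpoly = (Aalpha H₂ α).charpoly)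
    (hΓ : ∀ x, coronal (Aalpha H₁ α) x = coronal (Aalpha H₂ α) x) :
    (Aalpha (subdivisionEdgeJoin G₁ H₁) α).charpoly =
      (Aalpha (subdivisionEdgeJoin G₂ H₂) α).charpoly := by
  replace hr₂ := isRegularOfDegree_of_charpoly_Aalpha_eq hr₁ hr₂ hG
  have hcardE := card_edgeSet_eq_of_charpoly_Aalpha_eq hG
  have hcardW : Fintype.card W₁ = Fintype.card W₂ := card_eq_of_charpoly_eq hH
  have hS := charpoly_subdivisionAalpha_eq_of_charpoly_Aalpha_eq hr₁ hr₂ hG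
  refine eq_of_eventually_cofinite_eval_eq ?_
  filter_upwards [eventually_cofinite_eval_charpoly_ne_zero
      (subdivisionAalpha G₂ α (2 + Fintype.card W₂)),
    eventually_cofinite_eval_charpoly_ne_zero (subdivisionQuotient α r₁ (2 + Fintype.card W₂)),
    (sub_left_injective (b := α * Fintype.card G₂.edgeSet)).tendsto_cofinite.eventually
      (eventually_cofinite_eval_charpoly_ne_zero (Aalpha H₂ α))] with x hxS hxQ hxH
  rw [eval_charpoly_Aalpha_subdivisionEdgeJoin hr₂ H₂ hxS hxQ hxH,
    eval_charpoly_Aalpha_subdivisionEdgeJoin hr₁ H₁ (by rwa [hS, hcardW]) (by rwa [hcardW])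
      (by rwa [hH, hcardE]), hS, hH, hΓ, hcardE, hcardW]

end Cospectral

/-- Corollary: constructions of `A_α`-cospectral pairs from subdivision-edge joins.
(1) Joining two `A_α`-cospectral regular graphs with the same arbitrary graph `H` gives
`A_α`-cospectral graphs.  (2) Joining a regular graph `G` with two `A_α`-cospectral
graphs having equal `A_α`-coronals gives `A_α`-cospectral graphs. -/
theorem Aalpha_cospectral_subdivisionEdgeJoin
    (α : ℝ) (hα : α ∈ Set.Icc (0 : ℝ) 1) :
    (∀ (n₁ n₂ k r₁ r₂ : ℕ) (G₁ : SimpleGraph (Fin n₁)) (G₂ : SimpleGraph (Fin n₂))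
        (H : SimpleGraph (Fin k)),
      G₁.IsRegularOfDegree r₁ → G₂.IsRegularOfDegree r₂ →
      (Aalpha G₁ α).charpoly = (Aalpha G₂ α).charpoly →
      (Aalpha (subdivisionEdgeJoin G₁ H) α).charpoly =
        (Aalpha (subdivisionEdgeJoin G₂ H) α).charpoly) ∧
    (∀ (n k₁ k₂ r : ℕ) (G : SimpleGraph (Fin n)) (H₁ : SimpleGraph (Fin k₁))
        (H₂ : SimpleGraph (Fin k₂)),
      G.IsRegularOfDegree r →
      (Aalpha H₁ α).charpoly = (Aalpha H₂ α).charpoly →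
      (∀ x : ℝ, coronal (Aalpha H₁ α) x = coronal (Aalpha H₂ α) x) →
      (Aalpha (subdivisionEdgeJoin G H₁) α).charpoly =
        (Aalpha (subdivisionEdgeJoin G H₂) α).charpoly) :=
  ⟨fun _ _ _ _ _ _ _ _ hr₁ hr₂ hG =>
      Aalpha_cospectral_subdivisionEdgeJoin_general hr₁ hr₂ hG rfl fun _ => rfl,
    fun _ _ _ _ _ _ _ hr hH hΓ =>
      Aalpha_cospectral_subdivisionEdgeJoin_general hr hr rfl hH hΓ⟩
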